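/- arXiv:math/0703695 — 3 statements merged into one kernel-verified Lean document; each statement's English description precedes it below -/
import Mathlib

section
/- Let G be a threshold graph on {1,…,m} with weight vector w satisfying w_1 ≥ w_2 ≥ ⋯ ≥ w_m, and assume G has no isolated vertices. Then the edge ideal I_G equals the ideal of S generated by the monomials x_i·x_j with 1 ≤ i ≤ n and i < j ≤ λ_i; that is, I_G = Ī_{λ−μ} is the specialization of the generalized Ferrers ideal determined by λ = (λ_1,…,λ_n) and μ = (1, 2, …, n). -/
open MvPolynomial

/-!
Lowering the index of an endpoint of an edge does not decrease its weight, so the edge remains an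
edge as long as its endpoints stay distinct. Hence the neighbours of `i` with larger index form the
interval from `i + 1` to the largest neighbour `λ_i`. Listing every edge with its smaller endpoint
first, these intervals are exactly the rows of the Ferrers diagram.
-/

/-- The edge ideal of a graph, with coefficients in `R`. It is generated over ordered pairs of
adjacent vertices, so each edge contributes its monomial twice. -/
noncomputable def edgeIdeal (R : Type*) [CommSemiring R] {V : Type*} (G : SimpleGraph V) :
    Ideal (MvPolynomial V R) :=
  Ideal.span {p | ∃ i j : V, G.Adj i j ∧ p = X i * X j}

/-- The specialization `Ī_{λ−μ}` of a generalized Ferrers ideal, in which the row and column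
variables are identified. In 1-based labels row `i` consists of the columns `j` with
`μ_i < j ≤ λ_i`; since `j : Fin m` has label `j.val + 1`, this reads `mu i ≤ j.val < lam i`. -/
noncomputable def specializedFerrersIdeal (R : Type*) [CommSemiring R] {m n : ℕ} (hnm : n ≤ m)
    (lam mu : Fin n → ℕ) : Ideal (MvPolynomial (Fin m) R) :=
  Ideal.span {p | ∃ (i : Fin n) (j : Fin m), mu i ≤ j.val ∧ j.val < lam i ∧
    p = X (Fin.castLE hnm i) * X j}

theorem adj_of_adj_of_le_of_threshold {V M : Type*} [Preorder V] [AddZeroClass M] [Preorder M]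
    [AddLeftMono M] {G : SimpleGraph V} {w : V → M}
    (hthr : ∀ i j, i ≠ j → (G.Adj i j ↔ 0 < w i + w j)) (hw : Antitone w)
    {i j l : V} (hij : i ≠ j) (hjl : j ≤ l) (hil : G.Adj i l) : G.Adj i j := by
  rw [hthr i j hij]
  calc
    0 < w i + w l := (hthr i l hil.ne).1 hil
    _ ≤ w i + w j := by gcongr; exact hw hjl

theorem edgeIdeal_eq_span_lt (R : Type*) [CommSemiring R] {V : Type*} [LinearOrder V]
    (G : SimpleGraph V) :
    edgeIdeal R G = Ideal.span {p | ∃ i j : V, i < j ∧ G.Adj i j ∧ p = X i * X j} := by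
  unfold edgeIdeal
  congr 1
  ext p
  constructor
  · rintro ⟨i, j, hadj, rfl⟩
    rcases hadj.ne.lt_or_gt with hij | hji
    · exact ⟨i, j, hij, hadj, rfl⟩
    · exact ⟨j, i, hji, hadj.symm, mul_comm _ _⟩
  · rintro ⟨i, j, -, hadj, rfl⟩
    exact ⟨i, j, hadj, rfl⟩

theorem threshold_edge_ideal_eq_specialized_ferrers_general (R : Type*) [CommSemiring R]
    {m n : ℕ} (hnm : n ≤ m) {G : SimpleGraph (Fin m)}
    (hG : ∀ i j l, i < j → j ≤ l → G.Adj i l → G.Adj i j)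
    (hn_max : ∀ i j : Fin m, n ≤ i.val → i.val < j.val → ¬ G.Adj i j)
    {lam : Fin n → ℕ}
    (hlam_mem : ∀ i : Fin n, ∃ j : Fin m, j.val + 1 = lam i ∧ G.Adj (Fin.castLE hnm i) j)
    (hlam_max : ∀ (i : Fin n) (j : Fin m), G.Adj (Fin.castLE hnm i) j → j.val < lam i) :
    edgeIdeal R G = specializedFerrersIdeal R hnm lam (fun i ↦ i.val + 1) := by
  rw [edgeIdeal_eq_span_lt, specializedFerrersIdeal]
  congr 1
  ext p
  constructor
  · rintro ⟨i, j, hij, hadj, rfl⟩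
    have hin : i.val < n := lt_of_not_ge fun hni ↦ hn_max i j hni hij hadj
    exact ⟨⟨i, hin⟩, j, hij, hlam_max ⟨i, hin⟩ j hadj, rfl⟩
  · rintro ⟨i, j, hij, hj, rfl⟩
    obtain ⟨l, hl, hadj⟩ := hlam_mem i
    have hjl : j ≤ l := Nat.le_of_lt_succ (hj.trans_eq hl.symm)
    exact ⟨Fin.castLE hnm i, j, hij, hG _ _ _ hij hjl hadj, rfl⟩

/-- Let `G` be a threshold graph on `{1,…,m}` with weight
vector `w` satisfying `w_1 ≥ ⋯ ≥ w_m`, without isolated vertices; let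
`n := max{i : i ~ j for some j > i}` and `λ_i := max{j : i ~ j}`. Then the edge
ideal `I_G ⊆ S = K[x_1,…,x_m]` equals the ideal generated by the monomials
`x_i x_j` with `1 ≤ i ≤ n` and `i < j ≤ λ_i`, i.e. `I_G = Ī_{λ−μ}` with
`μ = (1,2,…,n)`.
Vertices are `Fin m` (vertex `v` has 1-based label `v.val + 1`); `i : Fin n`
has 1-based label `i.val + 1`, so `i < j ≤ λ_i` reads `i.val < j.val ∧ j.val < lam i`. -/
theorem threshold_edge_ideal_eq_specialized_ferrers
    (K : Type*) [Field K]
    (m : ℕ) (hm : 2 ≤ m) (G : SimpleGraph (Fin m)) (w : Fin m → ℝ)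
    (hthr : ∀ i j : Fin m, i ≠ j → (G.Adj i j ↔ 0 < w i + w j))
    (hw : Antitone w)
    (hiso : ∀ i, ∃ j, G.Adj i j)
    (n : ℕ) (hn : 1 ≤ n) (hnm : n ≤ m)
    (hn_mem : ∃ j : Fin m, n - 1 < j.val ∧ G.Adj ⟨n - 1, by omega⟩ j)
    (hn_max : ∀ i j : Fin m, n ≤ i.val → i.val < j.val → ¬ G.Adj i j)
    (lam : Fin n → ℕ)
    (hlam_mem : ∀ i : Fin n, ∃ j : Fin m, j.val + 1 = lam i ∧ G.Adj (Fin.castLE hnm i) j)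
    (hlam_max : ∀ (i : Fin n) (j : Fin m), G.Adj (Fin.castLE hnm i) j → j.val < lam i) :
    Ideal.span {p : MvPolynomial (Fin m) K |
        ∃ i j : Fin m, G.Adj i j ∧ p = X i * X j} =
      Ideal.span {p : MvPolynomial (Fin m) K |
        ∃ (i : Fin n) (j : Fin m), i.val < j.val ∧ j.val < lam i ∧
          p = X (Fin.castLE hnm i) * X j} :=
  threshold_edge_ideal_eq_specialized_ferrers_general K hnm
    (fun _ _ _ hij hjl ↦ adj_of_adj_of_le_of_threshold hthr hw hij.ne hjl) hn_max hlam_mem hlam_max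
end

section
/- Let I ⊆ S be a strongly stable monomial ideal all of whose minimal generators have degree two, and assume x_1·x_m ∈ I. Then λ_1 = m, λ_1 ≥ λ_2 ≥ ⋯ ≥ λ_n, and I equals the ideal of S generated by the monomials x_i·x_j with 1 ≤ i ≤ n and i ≤ j ≤ λ_i; that is, I = Ī_{λ−μ} is the specialization of the generalized Ferrers ideal determined by λ = (λ_1,…,λ_n) and μ = (0, 1, …, n−1). -/
open MvPolynomial

/-! Strong stability lets one replace a variable of a monomial of `I` by any smaller one. Applied to
the second factor of `x_i x_j`, this makes each row `{j | x_i x_j ∈ I}` an initial segment of length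
`λ_i`; applied to the first factor, it makes these segments shrink as `i` grows. By commutativity
the quadrics of `I` with `i ≤ j` already generate it. -/

/-- Strong stability of an ideal in the sense of monomial ideals: in every monomial of `I`, a
variable may be replaced by a smaller one. Monomials are given by their exponent vectors. -/
def IsStronglyStable {σ R : Type*} [LT σ] [CommSemiring R] (I : Ideal (MvPolynomial σ R)) : Prop :=
  ∀ u : σ →₀ ℕ, monomial u (1 : R) ∈ I → ∀ i j : σ, i < j → j ∈ u.support →
    monomial (u + Finsupp.single i 1 - Finsupp.single j 1) (1 : R) ∈ I

/-- Ideals generated by monomials of degree two, expressed intrinsically: `I` is generated by the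
products of two variables that it contains. -/
def IsQuadraticMonomialIdeal {σ R : Type*} [CommSemiring R] (I : Ideal (MvPolynomial σ R)) :
    Prop :=
  I = Ideal.span {p | (∃ i j : σ, p = X i * X j) ∧ p ∈ I}

/-- The number `λ_i = max {j | x_i x_j ∈ I}`, as a relation between `i` and `l = λ_i`. The maximum
is taken over the labels `j = 1, …, m`, while `Fin m` counts from `0`. -/
def IsRowLength {m : ℕ} {R : Type*} [CommSemiring R] (I : Ideal (MvPolynomial (Fin m) R))
    (i : Fin m) (l : ℕ) : Prop :=
  IsGreatest {l | ∃ j : Fin m, j.val + 1 = l ∧ X i * X j ∈ I} l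

namespace IsStronglyStable

variable {σ R : Type*} [PartialOrder σ] [CommSemiring R] {I : Ideal (MvPolynomial σ R)}

theorem monomial_mul_X_mem (hI : IsStronglyStable I) {u : σ →₀ ℕ} {i j : σ} (hij : i ≤ j)
    (hj : monomial u (1 : R) * X j ∈ I) : monomial u (1 : R) * X i ∈ I := by
  rcases hij.eq_or_lt with rfl | hlt
  · exact hj
  · have hmul (k : σ) : monomial u (1 : R) * X k = monomial (u + Finsupp.single k 1) 1 := by
      rw [monomial_add_single, pow_one]
    rw [hmul] at hj ⊢
    have hmem := hI _ hj i j hlt (by simp)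
    rwa [add_right_comm, add_tsub_cancel_right] at hmem

theorem X_mul_X_mem (hI : IsStronglyStable I) {i j k : σ} (hjk : j ≤ k)
    (hk : (X i * X k : MvPolynomial σ R) ∈ I) : (X i * X j : MvPolynomial σ R) ∈ I :=
  hI.monomial_mul_X_mem hjk hk

end IsStronglyStable

theorem IsQuadraticMonomialIdeal.le_of_X_mul_X_mem {σ R : Type*} [LinearOrder σ] [CommSemiring R]
    {I J : Ideal (MvPolynomial σ R)} (hI : IsQuadraticMonomialIdeal I)
    (hJ : ∀ i j : σ, i ≤ j → X i * X j ∈ I → X i * X j ∈ J) : I ≤ J := by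
  refine hI.le.trans (Ideal.span_le.2 ?_)
  rintro _ ⟨⟨i, j, rfl⟩, hij⟩
  rcases le_total i j with h | h
  · exact hJ i j h hij
  · rw [mul_comm] at hij ⊢
    exact hJ j i h hij

section RowLength

variable {m n : ℕ} {R : Type*} [CommSemiring R] {I : Ideal (MvPolynomial (Fin m) R)}

theorem IsRowLength.eq_of_X_mul_X_last_mem {i j : Fin m} {l : ℕ} (hl : IsRowLength I i l)
    (hj : j.val + 1 = m) (hij : X i * X j ∈ I) : l = m := by
  obtain ⟨k, hk, -⟩ := hl.1
  have hle : m ≤ l := hl.2 ⟨j, hj, hij⟩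
  omega

theorem IsStronglyStable.X_mul_X_mem_iff_lt (hI : IsStronglyStable I) {i j : Fin m} {l : ℕ}
    (hl : IsRowLength I i l) : X i * X j ∈ I ↔ j.val < l := by
  refine ⟨fun hij => hl.2 ⟨j, rfl, hij⟩, fun hj => ?_⟩
  obtain ⟨k, rfl, hk⟩ := hl.1
  exact hI.X_mul_X_mem (Fin.le_def.2 (Nat.lt_succ_iff.1 hj)) hk

theorem IsStronglyStable.rowLength_le (hI : IsStronglyStable I) {i i' : Fin m} {l l' : ℕ}
    (hl : IsRowLength I i l) (hl' : IsRowLength I i' l') (hii' : i ≤ i') : l' ≤ l := by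
  obtain ⟨j, hj, hmem⟩ := hl'.1
  rw [mul_comm] at hmem
  have hji : X j * X i ∈ I := hI.X_mul_X_mem hii' hmem
  rw [mul_comm] at hji
  exact hl.2 ⟨j, hj, hji⟩

theorem IsStronglyStable.specializedFerrersIdeal_le (hI : IsStronglyStable I) {hnm : n ≤ m}
    {lam : Fin n → ℕ} (hlam : ∀ i, IsRowLength I (Fin.castLE hnm i) (lam i)) (mu : Fin n → ℕ) :
    specializedFerrersIdeal R hnm lam mu ≤ I := by
  refine Ideal.span_le.2 ?_
  rintro _ ⟨i, j, -, hj, rfl⟩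
  exact (hI.X_mul_X_mem_iff_lt (hlam i)).2 hj

theorem IsQuadraticMonomialIdeal.le_specializedFerrersIdeal (hI : IsQuadraticMonomialIdeal I)
    {hnm : n ≤ m} (hn : ∀ i j : Fin m, i ≤ j → X i * X j ∈ I → i.val < n)
    {lam : Fin n → ℕ} (hlam : ∀ i, IsRowLength I (Fin.castLE hnm i) (lam i)) :
    I ≤ specializedFerrersIdeal R hnm lam Fin.val := by
  refine hI.le_of_X_mul_X_mem fun i j hij hmem => Ideal.subset_span ?_
  let row : Fin n := ⟨i, hn i j hij hmem⟩
  exact ⟨row, j, hij, (hlam row).2 ⟨j, rfl, hmem⟩, rfl⟩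

end RowLength

theorem strongly_stable_eq_specialized_ferrers_general
    {R : Type*} [CommSemiring R] {m n : ℕ} {I : Ideal (MvPolynomial (Fin m) R)}
    (hstable : IsStronglyStable I) (hquad : IsQuadraticMonomialIdeal I)
    (hn : 0 < n) (hnm : n ≤ m) (hn_max : ∀ i j : Fin m, i ≤ j → X i * X j ∈ I → i.val < n)
    {lam : Fin n → ℕ} (hlam : ∀ i, IsRowLength I (Fin.castLE hnm i) (lam i))
    (hx1m : X (⟨0, by omega⟩ : Fin m) * X (⟨m - 1, by omega⟩ : Fin m) ∈ I) :
    lam ⟨0, hn⟩ = m ∧ Antitone lam ∧ I = specializedFerrersIdeal R hnm lam Fin.val := by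
  refine ⟨?_, ?_, ?_⟩
  · exact (hlam ⟨0, hn⟩).eq_of_X_mul_X_last_mem (Nat.sub_add_cancel (hn.trans_le hnm)) hx1m
  · exact fun i i' hii' => hstable.rowLength_le (hlam i) (hlam i') hii'
  · exact le_antisymm (hquad.le_specializedFerrersIdeal hn_max hlam)
      (hstable.specializedFerrersIdeal_le hlam Fin.val)

/-- Let `I ⊆ S = K[x_1,…,x_m]` be a strongly stable monomial
ideal whose minimal generators all have degree two (expressed by: `I` is
generated by the monomials `x_i x_j` lying in `I`), with `x_1 x_m ∈ I`; let
`n := max{i : x_i x_j ∈ I for some j ≥ i}` and `λ_i := max{j : x_i x_j ∈ I}`.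
Then `λ_1 = m`, `λ` is nonincreasing, and `I` equals the ideal generated by the
monomials `x_i x_j` with `1 ≤ i ≤ n` and `i ≤ j ≤ λ_i`; i.e. `I = Ī_{λ−μ}`
with `μ = (0,1,…,n−1)`.
Variables are indexed by `Fin m` (`x_v` has 1-based label `v.val + 1`);
`i : Fin n` has 1-based label `i.val + 1`, so `i ≤ j ≤ λ_i` reads
`i.val ≤ j.val ∧ j.val < lam i`. Strong stability is expressed on exponent
vectors `u : Fin m →₀ ℕ`. -/
theorem strongly_stable_eq_specialized_ferrers
    (K : Type*) [Field K] (m : ℕ) (hm : 2 ≤ m)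
    (I : Ideal (MvPolynomial (Fin m) K))
    (hss : ∀ u : Fin m →₀ ℕ, (monomial u (1 : K)) ∈ I →
      ∀ i j : Fin m, i < j → j ∈ u.support →
        (monomial (u + Finsupp.single i 1 - Finsupp.single j 1) (1 : K)) ∈ I)
    (hgen : I = Ideal.span {p : MvPolynomial (Fin m) K |
        (∃ i j : Fin m, p = X i * X j) ∧ p ∈ I})
    (n : ℕ) (hn : 1 ≤ n) (hnm : n ≤ m)
    (hn_mem : ∃ j : Fin m, n - 1 ≤ j.val ∧
      (X (⟨n - 1, by omega⟩ : Fin m) * X j : MvPolynomial (Fin m) K) ∈ I)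
    (hn_max : ∀ i j : Fin m, n ≤ i.val → i.val ≤ j.val →
      (X i * X j : MvPolynomial (Fin m) K) ∉ I)
    (lam : Fin n → ℕ)
    (hlam_mem : ∀ i : Fin n, ∃ j : Fin m, j.val + 1 = lam i ∧
      (X (Fin.castLE hnm i) * X j : MvPolynomial (Fin m) K) ∈ I)
    (hlam_max : ∀ (i : Fin n) (j : Fin m),
      (X (Fin.castLE hnm i) * X j : MvPolynomial (Fin m) K) ∈ I → j.val < lam i)
    (hx1m : (X (⟨0, by omega⟩ : Fin m) * X (⟨m - 1, by omega⟩ : Fin m) :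
      MvPolynomial (Fin m) K) ∈ I) :
    lam ⟨0, hn⟩ = m ∧
    Antitone lam ∧
    I = Ideal.span {p : MvPolynomial (Fin m) K |
      ∃ (i : Fin n) (j : Fin m), i.val ≤ j.val ∧ j.val < lam i ∧
        p = X (Fin.castLE hnm i) * X j} :=
  strongly_stable_eq_specialized_ferrers_general hss hgen hn hnm
    (fun i j hij hmem => not_le.1 fun hi => hn_max i j hi hij hmem)
    (fun i => ⟨hlam_mem i, by rintro _ ⟨j, rfl, hj⟩; exact hlam_max i j hj⟩) hx1m
end

section
/- There is a K-algebra automorphism of R = K[x_1,x_2,x_3,y_1,…,y_5] fixing x_1, x_2, x_3 and permuting the variables y_1,…,y_5 that maps I_{λ−μ} onto I_{λ'−μ'} (so the two generalized Ferrers ideals are isomorphic), but the graphs Ḡ_{λ−μ} and Ḡ_{λ'−μ'} are not isomorphic: there is no graph isomorphism between them. (Indeed, Ḡ_{λ'−μ'} has two vertices of degree two, whereas Ḡ_{λ−μ} has no vertex of degree two.) -/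
open MvPolynomial Sum

/-!
The intervals `(μ_i, λ_i]` form a decreasing chain of sets of columns of sizes `4, 2, 1`, and so do
the intervals `(μ'_i, λ'_i]`. A permutation of the columns carrying one chain to the other renames
the generators of `I_{λ−μ}` to those of `I_{λ'−μ'}`. Specialization identifies rows with columns, so
a permutation of the columns alone need not induce a map of graphs; here the degree sequences
`4, 3, 3, 3, 1` and `4, 3, 2, 2, 3` differ.
-/

section BipartiteEdgeIdeal

variable {α α' β β' : Type*}

/-- The edge ideal of the bipartite graph with edge set `E ⊆ α × β`, in the polynomial ring whose
variables are `x_a = X (inl a)` and `y_b = X (inr b)`. -/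
noncomputable def bipartiteEdgeIdeal (R : Type*) [CommSemiring R] (E : Set (α × β)) :
    Ideal (MvPolynomial (α ⊕ β) R) :=
  Ideal.span ((fun e ↦ X (inl e.1) * X (inr e.2)) '' E)

theorem map_rename_bipartiteEdgeIdeal (R : Type*) [CommSemiring R] (f : α → α') (g : β → β')
    (E : Set (α × β)) :
    (bipartiteEdgeIdeal R E).map (rename (Sum.map f g) : _ →ₐ[R] MvPolynomial (α' ⊕ β') R) =
      bipartiteEdgeIdeal R (Prod.map f g '' E) := by
  simp only [bipartiteEdgeIdeal, Ideal.map_span, Set.image_image, map_mul, rename_X, Sum.map_inl,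
    Sum.map_inr, Prod.map_fst, Prod.map_snd]

end BipartiteEdgeIdeal

theorem isEmpty_graphIso_of_forall_degree_ne {V W : Type*} {G : SimpleGraph V} {H : SimpleGraph W}
    [G.LocallyFinite] [H.LocallyFinite] (w : W) (h : ∀ v, G.degree v ≠ H.degree w) :
    IsEmpty (G ≃g H) :=
  ⟨fun φ ↦ h (φ.symm w) (φ.symm.degree_eq w)⟩

section SkewDiagram

variable {m n : ℕ}

/-- The graph whose edge ideal is the image of `bipartiteEdgeIdeal R E` under the specialization
`y_j ↦ x_j`: row `i` and column `j` are identified when `i.val = j.val`. It is meant for `m ≤ n` and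
diagrams without entries on the diagonal, any such entry being discarded as a loop. -/
def specializationGraph (E : Finset (Fin m × Fin n)) : SimpleGraph (Fin n) :=
  SimpleGraph.fromRel fun u v ↦ ∃ i : Fin m, i.val = u.val ∧ (i, v) ∈ E

instance (E : Finset (Fin m × Fin n)) : DecidableRel (specializationGraph E).Adj :=
  inferInstanceAs (DecidableRel (SimpleGraph.fromRel _).Adj)

/-- The skew diagram `λ − μ` (`lam` and `mu` here) with its columns numbered in `Fin n`. As rows and
columns are counted from `0`, the condition `μ_i < j ≤ λ_i` becomes `mu i ≤ j < lam i`. -/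
def skewDiagram (n : ℕ) (lam mu : Fin m → ℕ) : Finset (Fin m × Fin n) :=
  {p | mu p.1 ≤ p.2 ∧ p.2 < lam p.1}

end SkewDiagram

theorem skewDiagram_544_123 :
    skewDiagram 5 ![5, 4, 4] ![1, 2, 3] =
      {(0, 1), (0, 2), (0, 3), (0, 4), (1, 2), (1, 3), (2, 3)} := by
  decide

theorem skewDiagram_555_134 :
    skewDiagram 5 ![5, 5, 5] ![1, 3, 4] =
      {(0, 1), (0, 2), (0, 3), (0, 4), (1, 3), (1, 4), (2, 4)} := by
  decide

theorem image_skewDiagram_544_123 :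
    Prod.map id (c[2, 3, 4] : Equiv.Perm (Fin 5)) '' skewDiagram 5 ![5, 4, 4] ![1, 2, 3] =
      (skewDiagram 5 ![5, 5, 5] ![1, 3, 4] : Set (Fin 3 × Fin 5)) := by
  rw [← Finset.coe_image, Finset.coe_inj]
  decide

theorem degree_specializationGraph_skewDiagram_544_123_ne_two (v : Fin 5) :
    (specializationGraph (skewDiagram 5 ![5, 4, 4] ![1, 2, 3])).degree v ≠ 2 := by
  revert v
  decide

theorem degree_specializationGraph_skewDiagram_555_134_two :
    (specializationGraph (skewDiagram 5 ![5, 5, 5] ![1, 3, 4])).degree 2 = 2 := by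
  decide

theorem generalized_ferrers_iso_but_specializations_not_iso_general
    (R : Type*) [CommSemiring R] :
    (∃ π : Equiv.Perm (Fin 5),
      (bipartiteEdgeIdeal R (skewDiagram 5 ![5, 4, 4] ![1, 2, 3])).map
          (renameEquiv R (Equiv.sumCongr (Equiv.refl (Fin 3)) π)) =
        bipartiteEdgeIdeal R (skewDiagram 5 ![5, 5, 5] ![1, 3, 4])) ∧
    IsEmpty
      (specializationGraph (skewDiagram 5 ![5, 4, 4] ![1, 2, 3]) ≃g
        specializationGraph (skewDiagram 5 ![5, 5, 5] ![1, 3, 4])) := by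
  refine ⟨⟨c[2, 3, 4], ?_⟩, isEmpty_graphIso_of_forall_degree_ne 2 ?_⟩
  · rw [← image_skewDiagram_544_123]
    exact map_rename_bipartiteEdgeIdeal R id _ _
  · rw [degree_specializationGraph_skewDiagram_555_134_two]
    exact degree_specializationGraph_skewDiagram_544_123_ne_two

theorem bipartiteEdgeIdeal_skewDiagram_544_123 (R : Type*) [CommSemiring R] :
    bipartiteEdgeIdeal R (skewDiagram 5 ![5, 4, 4] ![1, 2, 3] : Set (Fin 3 × Fin 5)) =
      Ideal.span
        {X (inl 0) * X (inr 1), X (inl 0) * X (inr 2), X (inl 0) * X (inr 3),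
          X (inl 0) * X (inr 4), X (inl 1) * X (inr 2), X (inl 1) * X (inr 3),
          X (inl 2) * X (inr 3)} := by
  simp only [bipartiteEdgeIdeal, skewDiagram_544_123, Finset.coe_insert, Finset.coe_singleton,
    Set.image_insert_eq, Set.image_singleton]

theorem bipartiteEdgeIdeal_skewDiagram_555_134 (R : Type*) [CommSemiring R] :
    bipartiteEdgeIdeal R (skewDiagram 5 ![5, 5, 5] ![1, 3, 4] : Set (Fin 3 × Fin 5)) =
      Ideal.span
        {X (inl 0) * X (inr 1), X (inl 0) * X (inr 2), X (inl 0) * X (inr 3),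
          X (inl 0) * X (inr 4), X (inl 1) * X (inr 3), X (inl 1) * X (inr 4),
          X (inl 2) * X (inr 4)} := by
  simp only [bipartiteEdgeIdeal, skewDiagram_555_134, Finset.coe_insert, Finset.coe_singleton,
    Set.image_insert_eq, Set.image_singleton]

theorem specializationGraph_skewDiagram_544_123 :
    specializationGraph (skewDiagram 5 ![5, 4, 4] ![1, 2, 3]) =
      SimpleGraph.fromRel fun i j : Fin 5 ↦
        (i.val, j.val) ∈ [(0, 1), (0, 2), (0, 3), (0, 4), (1, 2), (1, 3), (2, 3)] := by
  unfold specializationGraph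
  congr! 3 with i j
  revert i j
  decide

theorem specializationGraph_skewDiagram_555_134 :
    specializationGraph (skewDiagram 5 ![5, 5, 5] ![1, 3, 4]) =
      SimpleGraph.fromRel fun i j : Fin 5 ↦
        (i.val, j.val) ∈ [(0, 1), (0, 2), (0, 3), (0, 4), (1, 3), (1, 4), (2, 4)] := by
  unfold specializationGraph
  congr! 3 with i j
  revert i j
  decide

/-- With `λ = (5,4,4)`, `μ = (1,2,3)`, `λ' = (5,5,5)`,
`μ' = (1,3,4)`, there is a `K`-algebra automorphism of
`R = K[x_1,x_2,x_3,y_1,…,y_5]` fixing the `x`'s and permuting the `y`'s that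
maps `I_{λ−μ}` onto `I_{λ'−μ'}`, yet the specialized graphs `Ḡ_{λ−μ}` and
`Ḡ_{λ'−μ'}` are not isomorphic.
Here `inl k` is `x_{k+1}` and `inr k` is `y_{k+1}`; the graphs are on `Fin 5`
with vertex `v` standing for `v.val + 1`. -/
theorem generalized_ferrers_iso_but_specializations_not_iso
    (K : Type*) [Field K] :
    (∃ π : Equiv.Perm (Fin 5),
      Ideal.map
        (MvPolynomial.renameEquiv K (Equiv.sumCongr (Equiv.refl (Fin 3)) π) :
          MvPolynomial (Fin 3 ⊕ Fin 5) K ≃ₐ[K] MvPolynomial (Fin 3 ⊕ Fin 5) K)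
        (Ideal.span
          ({X (inl 0) * X (inr 1), X (inl 0) * X (inr 2), X (inl 0) * X (inr 3),
            X (inl 0) * X (inr 4), X (inl 1) * X (inr 2), X (inl 1) * X (inr 3),
            X (inl 2) * X (inr 3)} : Set (MvPolynomial (Fin 3 ⊕ Fin 5) K))) =
      Ideal.span
        ({X (inl 0) * X (inr 1), X (inl 0) * X (inr 2), X (inl 0) * X (inr 3),
          X (inl 0) * X (inr 4), X (inl 1) * X (inr 3), X (inl 1) * X (inr 4),
          X (inl 2) * X (inr 4)} : Set (MvPolynomial (Fin 3 ⊕ Fin 5) K))) ∧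
    IsEmpty
      ((SimpleGraph.fromRel fun i j : Fin 5 =>
          (i.val, j.val) ∈ [(0,1),(0,2),(0,3),(0,4),(1,2),(1,3),(2,3)]) ≃g
       (SimpleGraph.fromRel fun i j : Fin 5 =>
          (i.val, j.val) ∈ [(0,1),(0,2),(0,3),(0,4),(1,3),(1,4),(2,4)])) := by
  simpa only [bipartiteEdgeIdeal_skewDiagram_544_123, bipartiteEdgeIdeal_skewDiagram_555_134,
    specializationGraph_skewDiagram_544_123, specializationGraph_skewDiagram_555_134]
    using generalized_ferrers_iso_but_specializations_not_iso_general K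
end
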